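/- Fix s₀ > d/2 and s ∈ ℕ. Let f(ξ) be an x-independent symbol with |f|_{𝒩^m_s} ≤ C₀ < ∞ and define a(x,ξ) := (∂_{z_j^α}∂_{z_k^β}F)(u,∇u) f(ξ), where z_j^α = ∂_{x_j}^α u^σ, z_k^β = ∂_{x_k}^β u^{σ'}, for some j,k ∈ {1,…,d}, α,β ∈ {0,1}, σ,σ' ∈ {±} (with u^+ = u, u^− = ū). Then for u in the ball of radius R of H^{s+s₀+1}(𝕋^d;ℂ): |a|_{𝒩^m_s} ≤ C ‖u‖_{H^{s+s₀+1}}, where C > 0 depends on ‖u‖_{H^{s+s₀+1}} and is bounded as u → 0. Moreover, for any h ∈ H^{s+s₀+1}, h ↦ (∂_u a)(u;x,ξ)[h] is a ℂ-linear map and |(∂_u a)[h]|_{𝒩^m_s} ≤ C ‖h‖_{H^{s+s₀+1}}; the same holds for ∂_{ū}a. -/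

import Mathlib

open MeasureTheory Complex Real Filter

noncomputable section

namespace QLNLS

/-- Points of `ℝ^d` (resp. the torus `𝕋^d = (ℝ/2πℤ)^d`, via `2π`-periodic functions). -/
abbrev Vec (d : ℕ) := Fin d → ℝ
/-- Frequency lattice `ℤ^d`. -/
abbrev Zd (d : ℕ) := Fin d → ℤ
/-- Functions on the torus. -/
abbrev Fn (d : ℕ) := Vec d → ℂ
/-- Sequences of Fourier coefficients. -/
abbrev Seq (d : ℕ) := Zd d → ℂ
/-- Symbols `a(x, ξ)`. -/
abbrev Sym (d : ℕ) := Vec d → Vec d → ℂ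

variable {d : ℕ}

/-- Euclidean norm `|ξ|`. -/
def rnorm (ξ : Vec d) : ℝ := Real.sqrt (∑ i, (ξ i) ^ 2)

/-- Euclidean norm `|n|` of a lattice point. -/
def znorm (n : Zd d) : ℝ := Real.sqrt (∑ i, ((n i : ℝ)) ^ 2)

/-- Japanese bracket `⟨n⟩ = (1+|n|²)^{1/2}`. -/
def jb (n : Zd d) : ℝ := Real.sqrt (1 + ∑ i, ((n i : ℝ)) ^ 2)

/-- Japanese bracket `⟨ξ⟩` for real frequencies. -/
def jbR (ξ : Vec d) : ℝ := Real.sqrt (1 + ∑ i, (ξ i) ^ 2)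

/-- `2π`-periodicity in every coordinate. -/
def Periodic2pi (u : Fn d) : Prop :=
  ∀ (x : Vec d) (n : Zd d), u (fun i => x i + 2 * π * (n i : ℝ)) = u x

/-- A fundamental domain of the torus. -/
def box (d : ℕ) : Set (Vec d) := Set.univ.pi fun _ : Fin d => Set.Ioc (0 : ℝ) (2 * π)

/-- Fourier coefficient `û(n) = (2π)^{-d/2} ∫ u(x) e^{-i n·x} dx`. -/
def fCoeff (u : Fn d) (n : Zd d) : ℂ :=
  (((2 * π : ℝ) ^ (-(d : ℝ) / 2) : ℝ) : ℂ) *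
    ∫ x in box d, u x * Complex.exp (-Complex.I * ((∑ i, (n i : ℝ) * x i : ℝ) : ℂ))

/-- Squared Sobolev norm of a coefficient sequence. -/
def hsNormSq (s : ℝ) (c : Seq d) : ℝ := ∑' n : Zd d, jb n ^ (2 * s) * ‖c n‖ ^ 2

/-- Sobolev norm of a coefficient sequence. -/
def hsNorm (s : ℝ) (c : Seq d) : ℝ := Real.sqrt (hsNormSq s c)

/-- Membership of a coefficient sequence in `H^s`. -/
def InHsSeq (s : ℝ) (c : Seq d) : Prop :=
  Summable fun n : Zd d => jb n ^ (2 * s) * ‖c n‖ ^ 2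

/-- `H^s` norm of a function on the torus. -/
def sobNorm (s : ℝ) (u : Fn d) : ℝ := hsNorm s (fCoeff u)

/-- `u ∈ H^s(𝕋^d;ℂ)`: `u` is `2π`-periodic, its Fourier coefficients are `H^s`-summable,
and `u` is represented by its Fourier series. -/
def InHs (s : ℝ) (u : Fn d) : Prop :=
  Periodic2pi u ∧ InHsSeq s (fCoeff u) ∧
    ∀ x : Vec d, HasSum
      (fun n : Zd d => (((2 * π : ℝ) ^ (-(d : ℝ) / 2) : ℝ) : ℂ) * fCoeff u n *
        Complex.exp (Complex.I * ((∑ i, (n i : ℝ) * x i : ℝ) : ℂ))) (u x)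

/-- Partial derivative `∂_{x_i}` of a function. -/
def pdF (i : Fin d) (u : Fn d) : Fn d := fun x => fderiv ℝ u x (Pi.single i 1)

/-- Partial derivative `∂_{x_i}` of a symbol. -/
def pdx (i : Fin d) (a : Sym d) : Sym d := fun x ξ => fderiv ℝ (fun y => a y ξ) x (Pi.single i 1)

/-- Partial derivative `∂_{ξ_i}` of a symbol. -/
def pdxi (i : Fin d) (a : Sym d) : Sym d := fun x ξ => fderiv ℝ (fun η => a x η) ξ (Pi.single i 1)

/-- Iterated mixed partial derivative of a symbol along a list of directions
(`Sum.inl j` = `∂_{x_j}`, `Sum.inr j` = `∂_{ξ_j}`). -/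
def mderiv (L : List (Fin d ⊕ Fin d)) (a : Sym d) : Sym d :=
  L.foldr (fun i b => match i with | Sum.inl j => pdx j b | Sum.inr j => pdxi j b) a

/-- Number of `ξ`-derivatives in a list of directions. -/
def nXi (L : List (Fin d ⊕ Fin d)) : ℕ := (L.filter fun i => i.isRight).length

/-- The set of values whose supremum is the symbol seminorm `|a|_{𝒩^m_s}`. -/
def symVals (m : ℝ) (s : ℕ) (a : Sym d) : Set ℝ :=
  { r | ∃ (L : List (Fin d ⊕ Fin d)) (x ξ : Vec d), L.length ≤ s ∧
        r = jbR ξ ^ (-m + (nXi L : ℝ)) * ‖mderiv L a x ξ‖ }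

/-- Symbol seminorm `|a|_{𝒩^m_s}`. -/
def symNorm (m : ℝ) (s : ℕ) (a : Sym d) : ℝ := sSup (symVals m s a)

/-- Membership in the symbol class `𝒩^m_s`. -/
def InSymClass (m : ℝ) (s : ℕ) (a : Sym d) : Prop :=
  ContDiff ℝ (s : ℕ∞) (Function.uncurry a) ∧ (∀ ξ, Periodic2pi fun x => a x ξ) ∧
    BddAbove (symVals m s a)

/-- Poisson bracket `{a,b}`. -/
def poisson (a b : Sym d) : Sym d := fun x ξ =>
  ∑ j, (pdxi j a x ξ * pdx j b x ξ - pdx j a x ξ * pdxi j b x ξ)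

/-- The second-order bracket `σ(a,b)`. -/
def sigmaB (a b : Sym d) : Sym d := fun x ξ =>
  ∑ j, ∑ k,
    (pdxi j (pdxi k a) x ξ * pdx j (pdx k b) x ξ
      - 2 * pdx j (pdxi k a) x ξ * pdxi j (pdx k b) x ξ
      + pdx j (pdx k a) x ξ * pdxi j (pdxi k b) x ξ)

/-- An admissible cut-off function `χ`. -/
structure IsCutoff (χ : ℝ → ℝ) : Prop where
  smooth : ContDiff ℝ (⊤ : ℕ∞) χ
  mem : ∀ t : ℝ, χ t ∈ Set.Icc (0 : ℝ) 1
  eq_one : ∀ t : ℝ, |t| ≤ 5 / 4 → χ t = 1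
  eq_zero : ∀ t : ℝ, 8 / 5 ≤ |t| → χ t = 0

/-- `x`-Fourier coefficient `â(η, ξ)` of a symbol. -/
def symCoeff (a : Sym d) (η : Zd d) (ξ : Vec d) : ℂ := fCoeff (fun x => a x ξ) η

/-- Midpoint `(j+k)/2` of two lattice points. -/
def mid (j k : Zd d) : Vec d := fun i => ((j i + k i : ℤ) : ℝ) / 2

/-- The paradifferential cut-off factor `χ_ε(|j-k|/⟨j+k⟩) = χ(|j-k|/(ε⟨j+k⟩))`. -/
def cutFactor (χ : ℝ → ℝ) (ε : ℝ) (j k : Zd d) : ℝ :=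
  χ (znorm (j - k) / (ε * jb (j + k)))

/-- The Weyl paradifferential operator `T_a`, acting on Fourier coefficient sequences:
`(T_a h)^(j) = (2π)^{-d/2} Σ_k χ_ε(|j-k|/⟨j+k⟩) â(j-k,(j+k)/2) ĥ(k)`. -/
def paraC (χ : ℝ → ℝ) (ε : ℝ) (a : Sym d) (c : Seq d) : Seq d := fun j =>
  (((2 * π : ℝ) ^ (-(d : ℝ) / 2) : ℝ) : ℂ) *
    ∑' k : Zd d, ((cutFactor χ ε j k : ℝ) : ℂ) * symCoeff a (j - k) (mid j k) * c k

/-- The operator `R_a` built from the difference of two cut-offs. -/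
def remC (χ : ℝ → ℝ) (ε₁ ε₂ : ℝ) (a : Sym d) (c : Seq d) : Seq d := fun j =>
  (((2 * π : ℝ) ^ (-(d : ℝ) / 2) : ℝ) : ℂ) *
    ∑' k : Zd d, ((cutFactor χ ε₁ j k - cutFactor χ ε₂ j k : ℝ) : ℂ) *
      symCoeff a (j - k) (mid j k) * c k

/-- Wirtinger derivative `∂_{y_j} = (∂_{Re y_j} - i ∂_{Im y_j})/2`. -/
def wdP {n : ℕ} (j : Fin n) (G : (Fin n → ℂ) → ℂ) : (Fin n → ℂ) → ℂ := fun y =>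
  (fderiv ℝ G y (Pi.single j 1) - Complex.I * fderiv ℝ G y (Pi.single j Complex.I)) / 2

/-- Wirtinger derivative `∂_{ȳ_j} = (∂_{Re y_j} + i ∂_{Im y_j})/2`. -/
def wdM {n : ℕ} (j : Fin n) (G : (Fin n → ℂ) → ℂ) : (Fin n → ℂ) → ℂ := fun y =>
  (fderiv ℝ G y (Pi.single j 1) + Complex.I * fderiv ℝ G y (Pi.single j Complex.I)) / 2

/-- The 1-jet `(u, ∇u)` of a function, as a point of `ℂ^{d+1}`. -/
def jet (u : Fn d) (x : Vec d) : Fin (d + 1) → ℂ :=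
  Fin.cons (u x) fun j => pdF j u x

/-- The Hamiltonian nonlinearity
`P(u) = (∂_{ū}F)(u,∇u) - Σ_j ∂_{x_j}((∂_{ū_{x_j}}F)(u,∇u))`. -/
def Pop (F : (Fin (d + 1) → ℂ) → ℂ) (u : Fn d) : Fn d := fun x =>
  wdM 0 F (jet u x) - ∑ j, pdF j (fun y => wdM (Fin.succ j) F (jet u y)) x

/-- `F ∈ C^∞(ℂ^{d+1};ℝ)` in the real sense, with a zero of order at least 3 at the origin. -/
def GoodF (d : ℕ) (F : (Fin (d + 1) → ℂ) → ℂ) : Prop :=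
  ContDiff ℝ (⊤ : ℕ∞) F ∧ (∀ y, (F y).im = 0) ∧ ∀ k : ℕ, k ≤ 2 → iteratedFDeriv ℝ k F 0 = 0

/-- Global ellipticity (Hypothesis 1.1). -/
def Elliptic (d : ℕ) (F : (Fin (d + 1) → ℂ) → ℂ) : Prop :=
  ∃ c₁ > (0 : ℝ), ∃ c₂ > (0 : ℝ), ∀ (ξ : Vec d) (y : Fin (d + 1) → ℂ),
    (c₁ * ∑ i, (ξ i) ^ 2 ≤
      (∑ j, ∑ k, ((ξ j * ξ k : ℝ) : ℂ) *
        ((if j = k then 1 else 0) + wdP (Fin.succ j) (wdM (Fin.succ k) F) y)).re) ∧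
    (ξ ≠ 0 → c₂ ≤
      (1 + (∑ j, ∑ k, ((ξ j * ξ k : ℝ) : ℂ) * wdP (Fin.succ j) (wdM (Fin.succ k) F) y).re
            / ∑ i, (ξ i) ^ 2) ^ 2
        - ‖∑ j, ∑ k, ((ξ j * ξ k : ℝ) : ℂ) * wdM (Fin.succ j) (wdM (Fin.succ k) F) y‖ ^ 2
            / (∑ i, (ξ i) ^ 2) ^ 2)

/-- The symbol `a₂(x,ξ) = Σ_{j,k} (∂_{ū_{x_k}}∂_{u_{x_j}}F)(u,∇u) ξ_j ξ_k`. -/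
def a2sym (F : (Fin (d + 1) → ℂ) → ℂ) (u : Fn d) : Sym d := fun x ξ =>
  ∑ j, ∑ k, ((ξ j * ξ k : ℝ) : ℂ) * wdP (Fin.succ j) (wdM (Fin.succ k) F) (jet u x)

/-- The symbol `b₂(x,ξ) = Σ_{j,k} (∂_{ū_{x_k}}∂_{ū_{x_j}}F)(u,∇u) ξ_j ξ_k`. -/
def b2sym (F : (Fin (d + 1) → ℂ) → ℂ) (u : Fn d) : Sym d := fun x ξ =>
  ∑ j, ∑ k, ((ξ j * ξ k : ℝ) : ℂ) * wdM (Fin.succ j) (wdM (Fin.succ k) F) (jet u x)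

/-- The symbol `a₁(x,ξ) = (i/2) Σ_j ((∂_{ū}∂_{u_{x_j}}F) - (∂_u∂_{ū_{x_j}}F))(u,∇u) ξ_j`. -/
def a1sym (F : (Fin (d + 1) → ℂ) → ℂ) (u : Fn d) : Sym d := fun x ξ =>
  Complex.I / 2 * ∑ j, ((ξ j : ℝ) : ℂ) *
    (wdM 0 (wdP (Fin.succ j) F) (jet u x) - wdP 0 (wdM (Fin.succ j) F) (jet u x))

/-- Conjugation of a coefficient sequence: the sequence of `conj u`. -/
def starSeq (c : Seq d) : Seq d := fun n => (starRingEnd ℂ) (c (-n))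

/-- Pointwise conjugate of a function. -/
def starF (u : Fn d) : Fn d := fun x => (starRingEnd ℂ) (u x)

/-- Pointwise conjugate of a symbol. -/
def starSym (a : Sym d) : Sym d := fun x ξ => (starRingEnd ℂ) (a x ξ)

/-- The symbol `(x,ξ) ↦ conj (a(x,-ξ))`. -/
def flipSym (a : Sym d) : Sym d := fun x ξ => (starRingEnd ℂ) (a x (-ξ))

/-- The matrix `E = diag(1,-1)` as a sign vector. -/
def Em : Fin 2 → ℂ := ![1, -1]

/-- `Op^BW` of a 2×2 matrix of symbols, acting on vectors of coefficient sequences. -/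
def opBWmat (χ : ℝ → ℝ) (ε : ℝ) (A : Fin 2 → Fin 2 → Sym d) (C : Fin 2 → Seq d) :
    Fin 2 → Seq d := fun σ j => ∑ τ, paraC χ ε (A σ τ) (C τ) j

/-- The symbol `|ξ|²`. -/
def sq2sym (d : ℕ) : Sym d := fun _ ξ => (((rnorm ξ) ^ 2 : ℝ) : ℂ)

/-- The matrix of symbols `A₂(x,ξ)`. -/
def A2mat (F : (Fin (d + 1) → ℂ) → ℂ) (u : Fn d) : Fin 2 → Fin 2 → Sym d :=
  ![![a2sym F u, b2sym F u], ![flipSym (b2sym F u), a2sym F u]]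

/-- The matrix of symbols `A₁(x,ξ)`. -/
def A1mat (F : (Fin (d + 1) → ℂ) → ℂ) (u : Fn d) : Fin 2 → Fin 2 → Sym d :=
  ![![a1sym F u, 0], ![0, flipSym (a1sym F u)]]

/-- The full matrix of symbols `|ξ|²𝟙 + A₂(x,ξ) + A₁(x,ξ)`. -/
def sysSym (F : (Fin (d + 1) → ℂ) → ℂ) (u : Fn d) : Fin 2 → Fin 2 → Sym d := fun σ τ =>
  fun x ξ => (if σ = τ then sq2sym d x ξ else 0) + A2mat F u σ τ x ξ + A1mat F u σ τ x ξ

/-- `H^s` norm of a vector of coefficient sequences. -/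
def hsNormVec (s : ℝ) (C : Fin 2 → Seq d) : ℝ := hsNorm s (C 0) + hsNorm s (C 1)

/-- Membership of a vector of coefficient sequences in `H^s`. -/
def InHsVec (s : ℝ) (C : Fin 2 → Seq d) : Prop := InHsSeq s (C 0) ∧ InHsSeq s (C 1)

/-- The `L²` pairing `(U,V) = ∫ (u v̄ + ū v)`, at the level of Fourier coefficients. -/
def pairL2 (C E : Fin 2 → Seq d) : ℂ :=
  ∑' n : Zd d, (C 0 n * (starRingEnd ℂ) (E 0 n) + C 1 n * (starRingEnd ℂ) (E 1 n))

/-- The scalar `L²` pairing, at the level of Fourier coefficients. -/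
def pairS (c e : Seq d) : ℂ := ∑' n : Zd d, c n * (starRingEnd ℂ) (e n)

/-- A matrix of operators is real-to-real: it preserves the subspace `𝒰 = {(u, ū)}`. -/
def PreservesReality (M : (Fin 2 → Seq d) → (Fin 2 → Seq d)) : Prop :=
  ∀ c : Seq d, M ![c, starSeq c] 1 = starSeq (M ![c, starSeq c] 0)

/-- The coefficient vector of `(v(t), conj v(t))`. -/
def Vvec (v : ℝ → Fn d) (t : ℝ) : Fin 2 → Seq d :=
  ![fCoeff (v t), starSeq (fCoeff (v t))]

/-- `V = (v, v̄)` solves `V̇ = iE Op^BW(|ξ|²𝟙 + A₂ + A₁)V` on `[0,T)`. -/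
def SolvesLin (χ : ℝ → ℝ) (ε : ℝ) (F : (Fin (d + 1) → ℂ) → ℂ) (T : ℝ)
    (u v : ℝ → Fn d) : Prop :=
  ∀ᵐ t ∂(volume.restrict (Set.Ico (0 : ℝ) T)), ∀ (σ : Fin 2) (n : Zd d),
    HasDerivAt (fun τ => Vvec v τ σ n)
      (Complex.I * Em σ * opBWmat χ ε (sysSym F (u t)) (Vvec v t) σ n) t

/-- The regularity hypothesis (4.1):
`u ∈ L^∞([0,T);H^s) ∩ Lip([0,T);H^{s-2})`, with
`sup_t ‖u(t)‖_{H^{2s₀+7}} ≤ r` and `‖∂_t u‖_{H^{2s₀+5}} ≤ r` (as a Lipschitz bound). -/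
def RegHyp (s₀ : ℕ) (s T r : ℝ) (u : ℝ → Fn d) : Prop :=
  (∀ t ∈ Set.Ico (0 : ℝ) T, InHs s (u t)) ∧
  (∃ M : ℝ, ∀ t ∈ Set.Ico (0 : ℝ) T, sobNorm s (u t) ≤ M) ∧
  (∃ L : ℝ, ∀ t₁ ∈ Set.Ico (0 : ℝ) T, ∀ t₂ ∈ Set.Ico (0 : ℝ) T,
    sobNorm (s - 2) (u t₁ - u t₂) ≤ L * |t₁ - t₂|) ∧
  (∀ t ∈ Set.Ico (0 : ℝ) T, sobNorm (2 * (s₀ : ℝ) + 7) (u t) ≤ r) ∧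
  (∀ t₁ ∈ Set.Ico (0 : ℝ) T, ∀ t₂ ∈ Set.Ico (0 : ℝ) T,
    sobNorm (2 * (s₀ : ℝ) + 5) (u t₁ - u t₂) ≤ r * |t₁ - t₂|)

/-- `v ∈ L^∞([0,T);H^s) ∩ Lip([0,T);H^{s-2})`. -/
def RegSol (s T : ℝ) (v : ℝ → Fn d) : Prop :=
  (∀ t ∈ Set.Ico (0 : ℝ) T, InHs s (v t)) ∧
  (∃ M : ℝ, ∀ t ∈ Set.Ico (0 : ℝ) T, sobNorm s (v t) ≤ M) ∧
  (∃ L : ℝ, ∀ t₁ ∈ Set.Ico (0 : ℝ) T, ∀ t₂ ∈ Set.Ico (0 : ℝ) T,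
    sobNorm (s - 2) (v t₁ - v t₂) ≤ L * |t₁ - t₂|)

/-- The high-frequency cut-off `𝒳_R(ξ) = 1 - χ(|ξ|/R)`. -/
def cutXR (χ : ℝ → ℝ) (R : ℝ) (ξ : Vec d) : ℝ := 1 - χ (rnorm ξ / R)

/-- `ã_{2,R}(x,ξ) = |ξ|^{-2} a₂(x,ξ) 𝒳_R(ξ)`. -/
def a2til (F : (Fin (d + 1) → ℂ) → ℂ) (u : Fn d) (χ : ℝ → ℝ) (R : ℝ) : Sym d := fun x ξ =>
  ((((rnorm ξ) ^ 2)⁻¹ * cutXR χ R ξ : ℝ) : ℂ) * a2sym F u x ξ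

/-- `b̃_{2,R}(x,ξ) = |ξ|^{-2} b₂(x,ξ) 𝒳_R(ξ)`. -/
def b2til (F : (Fin (d + 1) → ℂ) → ℂ) (u : Fn d) (χ : ℝ → ℝ) (R : ℝ) : Sym d := fun x ξ =>
  ((((rnorm ξ) ^ 2)⁻¹ * cutXR χ R ξ : ℝ) : ℂ) * b2sym F u x ξ

/-- `λ₂ = ((1+ã_{2,R})² - |b̃_{2,R}|²)^{1/2}`. -/
def lam2 (F : (Fin (d + 1) → ℂ) → ℂ) (u : Fn d) (χ : ℝ → ℝ) (R : ℝ) :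
    Vec d → Vec d → ℝ := fun x ξ =>
  Real.sqrt ((1 + (a2til F u χ R x ξ).re) ^ 2 - ‖b2til F u χ R x ξ‖ ^ 2)

/-- The normalizing denominator `(2λ₂(1+ã_{2,R}+λ₂))^{1/2}`. -/
def sden (F : (Fin (d + 1) → ℂ) → ℂ) (u : Fn d) (χ : ℝ → ℝ) (R : ℝ) :
    Vec d → Vec d → ℝ := fun x ξ =>
  Real.sqrt (2 * lam2 F u χ R x ξ * (1 + (a2til F u χ R x ξ).re + lam2 F u χ R x ξ))

/-- The symbol `s₁`. -/
def s1sym (F : (Fin (d + 1) → ℂ) → ℂ) (u : Fn d) (χ : ℝ → ℝ) (R : ℝ) : Sym d := fun x ξ =>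
  (((1 + (a2til F u χ R x ξ).re + lam2 F u χ R x ξ) / sden F u χ R x ξ : ℝ) : ℂ)

/-- The symbol `s₂`. -/
def s2sym (F : (Fin (d + 1) → ℂ) → ℂ) (u : Fn d) (χ : ℝ → ℝ) (R : ℝ) : Sym d := fun x ξ =>
  -b2til F u χ R x ξ / ((sden F u χ R x ξ : ℝ) : ℂ)

/-- `ã⁺_{2,R} = λ₂ - 1`. -/
def a2plus (F : (Fin (d + 1) → ℂ) → ℂ) (u : Fn d) (χ : ℝ → ℝ) (R : ℝ) : Sym d := fun x ξ =>
  ((lam2 F u χ R x ξ - 1 : ℝ) : ℂ)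

/-- The diagonalized second-order symbol `a₂^{(1)}(x,ξ) = |ξ|² ã⁺_{2,R}(x,ξ)`. -/
def a2one (F : (Fin (d + 1) → ℂ) → ℂ) (u : Fn d) (χ : ℝ → ℝ) (R : ℝ) : Sym d := fun x ξ =>
  (((rnorm ξ) ^ 2 * (lam2 F u χ R x ξ - 1) : ℝ) : ℂ)

/-- The real scalar symbol `ℒ(x,ξ) = |ξ|² + a₂^{(1)}(x,ξ)`. -/
def Lscal (F : (Fin (d + 1) → ℂ) → ℂ) (u : Fn d) (χ : ℝ → ℝ) (R : ℝ) :
    Vec d → Vec d → ℝ := fun x ξ =>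
  (rnorm ξ) ^ 2 + (rnorm ξ) ^ 2 * (lam2 F u χ R x ξ - 1)

/-- The matrix `S(x,ξ)`. -/
def Smat (F : (Fin (d + 1) → ℂ) → ℂ) (u : Fn d) (χ : ℝ → ℝ) (R : ℝ) (x ξ : Vec d) :
    Matrix (Fin 2) (Fin 2) ℂ :=
  !![s1sym F u χ R x ξ, s2sym F u χ R x ξ;
     (starRingEnd ℂ) (s2sym F u χ R x ξ), s1sym F u χ R x ξ]

/-- The matrix `S^{-1}(x,ξ)`. -/
def SmatInv (F : (Fin (d + 1) → ℂ) → ℂ) (u : Fn d) (χ : ℝ → ℝ) (R : ℝ) (x ξ : Vec d) :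
    Matrix (Fin 2) (Fin 2) ℂ :=
  !![s1sym F u χ R x ξ, -s2sym F u χ R x ξ;
     -(starRingEnd ℂ) (s2sym F u χ R x ξ), s1sym F u χ R x ξ]

/-- The matrix `Ã_{2,R}(x,ξ)`. -/
def A2tilMat (F : (Fin (d + 1) → ℂ) → ℂ) (u : Fn d) (χ : ℝ → ℝ) (R : ℝ) (x ξ : Vec d) :
    Matrix (Fin 2) (Fin 2) ℂ :=
  !![a2til F u χ R x ξ, b2til F u χ R x ξ;
     (starRingEnd ℂ) (b2til F u χ R x (-ξ)), a2til F u χ R x ξ]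

/-- The matrix `E = diag(1,-1)`. -/
def EmatM : Matrix (Fin 2) (Fin 2) ℂ := !![1, 0; 0, -1]

/-- The matrix of symbols `S^{-1}(x,ξ)`. -/
def SinvMatSym (F : (Fin (d + 1) → ℂ) → ℂ) (u : Fn d) (χ : ℝ → ℝ) (R : ℝ) :
    Fin 2 → Fin 2 → Sym d :=
  ![![s1sym F u χ R, fun x ξ => -s2sym F u χ R x ξ],
    ![fun x ξ => -(starRingEnd ℂ) (s2sym F u χ R x ξ), s1sym F u χ R]]

/-- The entry `s₁^{(1)}` of the matrix `S₁`. -/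
def s1_1 (F : (Fin (d + 1) → ℂ) → ℂ) (u : Fn d) (χ : ℝ → ℝ) (R : ℝ) : Sym d := fun x ξ =>
  1 / (2 * Complex.I) *
    (poisson (s2sym F u χ R) (starSym (s2sym F u χ R)) x ξ * s1sym F u χ R x ξ
      + 2 * poisson (s1sym F u χ R) (s2sym F u χ R) x ξ *
          (starRingEnd ℂ) (s2sym F u χ R x ξ))

/-- The entry `s₂^{(1)}` of the matrix `S₁`. -/
def s2_1 (F : (Fin (d + 1) → ℂ) → ℂ) (u : Fn d) (χ : ℝ → ℝ) (R : ℝ) : Sym d := fun x ξ =>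
  1 / (2 * Complex.I) *
    (poisson (s2sym F u χ R) (starSym (s2sym F u χ R)) x ξ * s2sym F u χ R x ξ
      + 2 * poisson (s1sym F u χ R) (s2sym F u χ R) x ξ * s1sym F u χ R x ξ)

/-- The matrix `S₁(x,ξ)`. -/
def S1mat (F : (Fin (d + 1) → ℂ) → ℂ) (u : Fn d) (χ : ℝ → ℝ) (R : ℝ) (x ξ : Vec d) :
    Matrix (Fin 2) (Fin 2) ℂ :=
  (1 / (2 * Complex.I)) •
    (!![poisson (s2sym F u χ R) (starSym (s2sym F u χ R)) x ξ,
          2 * poisson (s1sym F u χ R) (s2sym F u χ R) x ξ;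
        -2 * poisson (s1sym F u χ R) (starSym (s2sym F u χ R)) x (-ξ),
          poisson (s2sym F u χ R) (starSym (s2sym F u χ R)) x (-ξ)] *
      Smat F u χ R x ξ)

/-- The symbol `g₁`. -/
def g1sym (F : (Fin (d + 1) → ℂ) → ℂ) (u : Fn d) (χ : ℝ → ℝ) (R : ℝ) : Sym d := fun x ξ =>
  1 / (2 * Complex.I) * poisson (s1_1 F u χ R) (s1sym F u χ R) x ξ
    - 1 / (2 * Complex.I) * poisson (s2_1 F u χ R) (starSym (s2sym F u χ R)) x ξ
    + 1 / 8 * sigmaB (s2sym F u χ R) (starSym (s2sym F u χ R)) x ξ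

/-- The symbol `g₂`. -/
def g2sym (F : (Fin (d + 1) → ℂ) → ℂ) (u : Fn d) (χ : ℝ → ℝ) (R : ℝ) : Sym d := fun x ξ =>
  -(1 / (2 * Complex.I)) * poisson (s1_1 F u χ R) (s2sym F u χ R) x ξ
    + 1 / (2 * Complex.I) * poisson (s2_1 F u χ R) (s1sym F u χ R) x ξ

/-- The derivative operator `∂_{x_i}` at the level of Fourier coefficients. -/
def dOp (i : Fin d) (c : Seq d) : Seq d := fun n => Complex.I * ((n i : ℝ) : ℂ) * c n

/-- A positive constant depending monotonically on a size parameter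
(hence bounded from above as the parameter goes to zero). -/
def GoodConst (C : ℝ → ℝ) : Prop := Monotone C ∧ ∀ x : ℝ, 0 < C x


/-- Selects the slot of `F(y₀,…,y_d)` corresponding to `∂^α_{x_j} u`:
slot `0` (i.e. `u`) if `α = 0`, slot `j+1` (i.e. `u_{x_j}`) if `α = 1`. -/
def slotIdx (α : Bool) (j : Fin d) : Fin (d + 1) := if α then Fin.succ j else 0

/-- Wirtinger derivative in slot `j`, with respect to `y_j` (`cflag = false`, sign `σ = +`)
or `ȳ_j` (`cflag = true`, sign `σ = -`). -/
def wdSel {n : ℕ} (cflag : Bool) (j : Fin n) (G : (Fin n → ℂ) → ℂ) : (Fin n → ℂ) → ℂ :=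
  if cflag then wdM j G else wdP j G

/-- The non-homogeneous symbol `a(x,ξ) = (∂_{z_j^α}∂_{z_k^β}F)(u,∇u) f(ξ)`. -/
def nemSym (F : (Fin (d + 1) → ℂ) → ℂ) (α β σ σ' : Bool) (j k : Fin d)
    (f : Vec d → ℂ) (u : Fn d) : Sym d := fun x ξ =>
  wdSel σ (slotIdx α j) (wdSel σ' (slotIdx β k) F) (jet u x) * f ξ

/-- The holomorphic differential `h ↦ (∂_u a)(u)[h]`. -/
def nemSymDu (F : (Fin (d + 1) → ℂ) → ℂ) (α β σ σ' : Bool) (j k : Fin d)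
    (f : Vec d → ℂ) (u h : Fn d) : Sym d := fun x ξ =>
  (∑ l, wdP l (wdSel σ (slotIdx α j) (wdSel σ' (slotIdx β k) F)) (jet u x) * jet h x l) * f ξ

/-- The antiholomorphic differential `h ↦ (∂_{ū} a)(u)[h]`. -/
def nemSymDubar (F : (Fin (d + 1) → ℂ) → ℂ) (α β σ σ' : Bool) (j k : Fin d)
    (f : Vec d → ℂ) (u h : Fn d) : Sym d := fun x ξ =>
  (∑ l, wdM l (wdSel σ (slotIdx α j) (wdSel σ' (slotIdx β k) F)) (jet u x) *
    (starRingEnd ℂ) (jet h x l)) * f ξ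

/-!
Sobolev embedding `H^{s+s₀+1} ⊂ C^{s+1}_b`, read off from the absolutely convergent Fourier series,
bounds the jet `(u, ∇u)` in `C^s_b` by a multiple of `‖u‖`. The symbol is `G(u, ∇u) f(ξ)`, where `G`
is a second derivative of `F` and so vanishes at the origin; the chain rule together with the mean
value inequality then bounds `G(u, ∇u)` in `C^s_b` linearly in the jet, with a constant growing
monotonically with its size. The differentials are contractions of `(∂G)(u, ∇u)` with the jet of
`h`, hence controlled by the Leibniz rule. Finally, the derivatives of a product `g(x) f(ξ)`
factor, so its seminorm is at most that of `f` times the `C^s_b` bound of `g`.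
-/

section CkBound

variable {E F G H : Type*} [NormedAddCommGroup E] [NormedSpace ℝ E]
  [NormedAddCommGroup F] [NormedSpace ℝ F] [NormedAddCommGroup G] [NormedSpace ℝ G]
  [NormedAddCommGroup H] [NormedSpace ℝ H]

/-- `g` lies in the ball of radius `B` of `C^n_b(E; F)`: it is `C^n` and its Fréchet derivatives
of order at most `n` are bounded by `B`, uniformly on `E`. It measures the `x`-regularity of
symbols and of the functions they are built from. -/
structure HasCkBound (n : ℕ) (B : ℝ) (g : E → F) : Prop where
  contDiff : ContDiff ℝ n g
  norm_iteratedFDeriv_le : ∀ k ≤ n, ∀ x, ‖iteratedFDeriv ℝ k g x‖ ≤ B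

namespace HasCkBound

variable {n : ℕ} {A B : ℝ} {f : E → F} {g : E → G}

lemma norm_le (hg : HasCkBound n B g) (x : E) : ‖g x‖ ≤ B := by
  simpa only [norm_iteratedFDeriv_zero] using hg.norm_iteratedFDeriv_le 0 n.zero_le x

lemma nonneg (hg : HasCkBound n B g) : 0 ≤ B := (norm_nonneg _).trans (hg.norm_le 0)

lemma mono {m : ℕ} (hg : HasCkBound n A g) (hm : m ≤ n) (hAB : A ≤ B) : HasCkBound m B g where
  contDiff := hg.contDiff.of_le (mod_cast hm)
  norm_iteratedFDeriv_le k hk x := (hg.norm_iteratedFDeriv_le k (hk.trans hm) x).trans hAB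

lemma zero_iff : HasCkBound 0 B g ↔ Continuous g ∧ ∀ x, ‖g x‖ ≤ B where
  mp hg := ⟨hg.contDiff.continuous, hg.norm_le⟩
  mpr hg := ⟨contDiff_zero.2 hg.1, fun k hk x => by
    obtain rfl : k = 0 := Nat.le_zero.1 hk
    simpa only [norm_iteratedFDeriv_zero] using hg.2 x⟩

lemma fderiv_right (hg : HasCkBound (n + 1) B g) : HasCkBound n B (fderiv ℝ g) where
  contDiff := hg.contDiff.fderiv_right (mod_cast le_rfl)
  norm_iteratedFDeriv_le k hk x := by
    rw [norm_iteratedFDeriv_fderiv]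
    exact hg.norm_iteratedFDeriv_le (k + 1) (by lia) x

lemma of_fderiv (hd : Differentiable ℝ g) (h₀ : ∀ x, ‖g x‖ ≤ B)
    (h₁ : HasCkBound n B (fderiv ℝ g)) : HasCkBound (n + 1) B g where
  contDiff := by
    rw [Nat.cast_add_one, contDiff_succ_iff_fderiv]
    exact ⟨hd, by simp, h₁.contDiff⟩
  norm_iteratedFDeriv_le k hk x := by
    cases k with
    | zero => simpa only [norm_iteratedFDeriv_zero] using h₀ x
    | succ k =>
      rw [← norm_iteratedFDeriv_fderiv]
      exact h₁.norm_iteratedFDeriv_le k (by lia) x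

lemma clm_comp (L : G →L[ℝ] H) (hg : HasCkBound n B g) :
    HasCkBound n (‖L‖ * B) (fun x => L (g x)) where
  contDiff := L.contDiff.comp hg.contDiff
  norm_iteratedFDeriv_le k hk x :=
    (L.norm_iteratedFDeriv_comp_left hg.contDiff.contDiffAt (mod_cast hk)).trans
      (by gcongr; exact hg.norm_iteratedFDeriv_le k hk x)

lemma linearIsometry_comp (L : G →ₗᵢ[ℝ] H) (hg : HasCkBound n B g) :
    HasCkBound n B (fun x => L (g x)) where
  contDiff := L.contDiff.comp hg.contDiff
  norm_iteratedFDeriv_le k hk x :=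
    (L.norm_iteratedFDeriv_comp_left (hg.contDiff.contDiffAt.of_le (mod_cast hk)) le_rfl).trans_le
      (hg.norm_iteratedFDeriv_le k hk x)

lemma bilin (L : F →L[ℝ] G →L[ℝ] H) (hL : ‖L‖ ≤ 1) (hf : HasCkBound n A f)
    (hg : HasCkBound n B g) : HasCkBound n (2 ^ n * A * B) (fun x => L (f x) (g x)) where
  contDiff := L.isBoundedBilinearMap.contDiff.comp (hf.contDiff.prodMk hg.contDiff)
  norm_iteratedFDeriv_le k hk x := by
    have hA := hf.nonneg
    have hB := hg.nonneg
    calc ‖iteratedFDeriv ℝ k (fun x => L (f x) (g x)) x‖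
        ≤ ∑ i ∈ Finset.range (k + 1),
            (k.choose i : ℝ) * ‖iteratedFDeriv ℝ i f x‖ * ‖iteratedFDeriv ℝ (k - i) g x‖ :=
          L.norm_iteratedFDeriv_le_of_bilinear_of_le_one hf.contDiff hg.contDiff x
            (mod_cast hk) hL
      _ ≤ ∑ i ∈ Finset.range (k + 1), (k.choose i : ℝ) * A * B := by
          gcongr with i hi
          · exact hf.norm_iteratedFDeriv_le i (by have := Finset.mem_range.1 hi; lia) x
          · exact hg.norm_iteratedFDeriv_le (k - i) (by lia) x
      _ = 2 ^ k * A * B := by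
          rw [← Finset.sum_mul, ← Finset.sum_mul, ← Nat.cast_sum, Nat.sum_range_choose]
          norm_num
      _ ≤ 2 ^ n * A * B := by gcongr; norm_num

lemma sum {ι : Type*} [Fintype ι] {B : ι → ℝ} {g : ι → E → G} (hg : ∀ i, HasCkBound n (B i) (g i)) :
    HasCkBound n (∑ i, B i) (fun x => ∑ i, g i x) where
  contDiff := ContDiff.sum fun i _ => (hg i).contDiff
  norm_iteratedFDeriv_le k hk x := by
    rw [iteratedFDeriv_fun_sum_apply fun i _ =>
      ((hg i).contDiff.of_le (mod_cast hk)).contDiffAt]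
    exact norm_sum_le_of_le _ fun i _ => (hg i).norm_iteratedFDeriv_le k hk x

lemma tsum [CompleteSpace G] {ι : Type*} {B : ι → ℝ} {g : ι → E → G} (hB : Summable B)
    (hg : ∀ i, HasCkBound n (B i) (g i)) : HasCkBound n (∑' i, B i) (fun x => ∑' i, g i x) where
  contDiff := contDiff_tsum (N := n) (v := fun _ => B) (fun i => (hg i).contDiff) (fun _ _ => hB)
    fun k i x hk => (hg i).norm_iteratedFDeriv_le k (mod_cast hk) x
  norm_iteratedFDeriv_le k hk x := by
    rw [iteratedFDeriv_tsum_apply (N := n) (v := fun _ => B) (fun i => (hg i).contDiff)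
      (fun _ _ => hB) (fun k i x hk => (hg i).norm_iteratedFDeriv_le k (mod_cast hk) x)
      (mod_cast hk)]
    exact tsum_of_norm_bounded hB.hasSum fun i => (hg i).norm_iteratedFDeriv_le k hk x

lemma pi {ι : Type*} [Fintype ι] {g : E → ι → G} (hB : 0 ≤ B)
    (hg : ∀ i, HasCkBound n B (fun x => g x i)) : HasCkBound n B g where
  contDiff := contDiff_pi.2 fun i => (hg i).contDiff
  norm_iteratedFDeriv_le k hk x := by
    have hgk : ContDiffAt ℝ k g x :=
      ((contDiff_pi.2 fun i => (hg i).contDiff).of_le (mod_cast hk)).contDiffAt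
    refine ContinuousMultilinearMap.opNorm_le_bound hB fun v => ?_
    refine (pi_norm_le_iff_of_nonneg (by positivity)).2 fun i => ?_
    have hi : iteratedFDeriv ℝ k (fun x => g x i) x v = iteratedFDeriv ℝ k g x v i := by
      have := (ContinuousLinearMap.proj (R := ℝ) (φ := fun _ : ι => G) i).iteratedFDeriv_comp_left
        hgk le_rfl
      exact congrArg (· v) this
    rw [← hi]
    exact ContinuousMultilinearMap.le_of_opNorm_le ((hg i).norm_iteratedFDeriv_le k hk x) v

end HasCkBound

lemma hasCkBound_cexp_I_mul (L : E →L[ℝ] ℝ) {B : ℝ} (hL : ‖L‖ ≤ B) (hB : 1 ≤ B) (n : ℕ) :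
    HasCkBound n (B ^ n) (fun x => Complex.exp (Complex.I * (L x : ℂ))) := by
  have hderiv (x : E) : HasFDerivAt (fun x => Complex.exp (Complex.I * (L x : ℂ)))
      (L.smulRight (Complex.I * Complex.exp (Complex.I * (L x : ℂ)))) x := by
    have hLx := (Complex.ofRealCLM.comp L).hasFDerivAt (x := x)
    refine (hLx.const_mul Complex.I).cexp.congr_fderiv (ContinuousLinearMap.ext fun v => ?_)
    simp [mul_comm, mul_left_comm]
  have hnorm (x : E) : ‖Complex.exp (Complex.I * (L x : ℂ))‖ = 1 := by
    rw [mul_comm, Complex.norm_exp_ofReal_mul_I]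
  induction n with
  | zero =>
    exact HasCkBound.zero_iff.2 ⟨by fun_prop, fun x => by simp [hnorm]⟩
  | succ n ih =>
    refine .of_fderiv (fun x => (hderiv x).differentiableAt)
      (fun x => (hnorm x).trans_le (one_le_pow₀ hB)) ?_
    have hfderiv : fderiv ℝ (fun x => Complex.exp (Complex.I * (L x : ℂ))) = fun x =>
        ((ContinuousLinearMap.smulRightL ℝ E ℂ L).comp
          (ContinuousLinearMap.mul ℝ ℂ Complex.I)) (Complex.exp (Complex.I * (L x : ℂ))) :=
      funext fun x => (hderiv x).fderiv
    rw [hfderiv, pow_succ']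
    refine (ih.clm_comp _).mono le_rfl ?_
    gcongr
    refine (ContinuousLinearMap.opNorm_comp_le _ _).trans ?_
    rw [ContinuousLinearMap.norm_smulRightL]
    simpa using hL

end CkBound

section Composition

namespace GoodConst

lemma const_mul {C : ℝ → ℝ} (hC : GoodConst C) {c : ℝ} (hc : 0 < c) :
    GoodConst fun t => c * C t :=
  ⟨hC.1.const_mul hc.le, fun t => mul_pos hc (hC.2 t)⟩

lemma mul {A B : ℝ → ℝ} (hA : GoodConst A) (hB : GoodConst B) : GoodConst fun t => A t * B t :=
  ⟨hA.1.mul hB.1 (fun t => (hA.2 t).le) fun t => (hB.2 t).le, fun t => mul_pos (hA.2 t) (hB.2 t)⟩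

lemma comp_const_mul {C : ℝ → ℝ} (hC : GoodConst C) {c : ℝ} (hc : 0 ≤ c) :
    GoodConst fun t => C (c * t) :=
  ⟨hC.1.comp (monotone_id.const_mul hc), fun t => hC.2 (c * t)⟩

lemma add {A B : ℝ → ℝ} (hA : GoodConst A) (hB : GoodConst B) : GoodConst fun t => A t + B t :=
  ⟨hA.1.add hB.1, fun t => add_pos (hA.2 t) (hB.2 t)⟩

lemma sum {ι : Type*} [Fintype ι] [Nonempty ι] {A : ι → ℝ → ℝ} (hA : ∀ i, GoodConst (A i)) :
    GoodConst fun t => ∑ i, A i t :=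
  ⟨fun _ _ h => Finset.sum_le_sum fun i _ => (hA i).1 h,
    fun t => Finset.sum_pos (fun i _ => (hA i).2 t) Finset.univ_nonempty⟩

lemma le_sum {ι : Type*} [Fintype ι] {A : ι → ℝ → ℝ} (hA : ∀ i, GoodConst (A i)) (i : ι)
    (t : ℝ) : A i t ≤ ∑ j, A j t :=
  Finset.single_le_sum (fun j _ => ((hA j).2 t).le) (Finset.mem_univ i)

end GoodConst

lemma exists_goodConst_norm_le {F G : Type*} [NormedAddCommGroup F] [ProperSpace F]
    [NormedAddCommGroup G] {g : F → G} (hg : Continuous g) :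
    ∃ A : ℝ → ℝ, GoodConst A ∧ ∀ y, ‖g y‖ ≤ A ‖y‖ := by
  let S (M : ℝ) : Set ℝ := (‖g ·‖) '' Metric.closedBall 0 M
  have hbdd (M : ℝ) : BddAbove (S M) :=
    (isCompact_closedBall 0 M).bddAbove_image hg.norm.continuousOn
  have hnonneg (M : ℝ) : 0 ≤ sSup (S M) :=
    Real.sSup_nonneg (Set.forall_mem_image.2 fun y _ => norm_nonneg (g y))
  refine ⟨fun M => 1 + sSup (S M), ⟨fun M M' hM => ?_, fun M => by linarith [hnonneg M]⟩,
    fun y => ?_⟩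
  · refine add_le_add le_rfl (Real.sSup_le (fun r hr => le_csSup (hbdd M') ?_) (hnonneg M'))
    exact Set.image_mono (Metric.closedBall_subset_closedBall hM) hr
  · have hy : ‖g y‖ ≤ sSup (S ‖y‖) := le_csSup (hbdd _) ⟨y, by simp, rfl⟩
    linarith

variable {E F G : Type*} [NormedAddCommGroup E] [NormedSpace ℝ E]
  [NormedAddCommGroup F] [NormedSpace ℝ F] [ProperSpace F] [NormedAddCommGroup G] [NormedSpace ℝ G]
  {n : ℕ}

lemma exists_goodConst_norm_iteratedFDeriv_le {g : F → G} (hg : ContDiff ℝ n g) :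
    ∃ A : ℝ → ℝ, GoodConst A ∧ ∀ k ≤ n, ∀ y, ‖iteratedFDeriv ℝ k g y‖ ≤ A ‖y‖ := by
  have hk (k : Fin (n + 1)) : Continuous (iteratedFDeriv ℝ k g) :=
    hg.continuous_iteratedFDeriv (mod_cast k.is_le)
  choose A hA hAg using fun k => exists_goodConst_norm_le (hk k)
  exact ⟨_, .sum hA, fun k hk y =>
    (hAg ⟨k, by lia⟩ y).trans (GoodConst.le_sum hA ⟨k, by lia⟩ ‖y‖)⟩

lemma exists_goodConst_hasCkBound_comp {g : F → G} (hg : ContDiff ℝ n g) :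
    ∃ A : ℝ → ℝ, GoodConst A ∧ ∀ B, ∀ v : E → F, HasCkBound n B v →
      HasCkBound n (A B) (fun x => g (v x)) := by
  obtain ⟨A, hA, hAg⟩ := exists_goodConst_norm_iteratedFDeriv_le hg
  have hmax : GoodConst fun M => max 1 M ^ n :=
    ⟨fun M M' hM => by dsimp only; gcongr, fun M => by positivity⟩
  refine ⟨_, (hA.const_mul (c := n.factorial) (by positivity)).mul hmax, fun B v hv =>
    ⟨hg.comp hv.contDiff, fun k hk x => ?_⟩⟩
  have hB : 1 ≤ max 1 B := le_max_left 1 B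
  have hA₀ := (hA.2 B).le
  calc ‖iteratedFDeriv ℝ k (g ∘ v) x‖
      ≤ k.factorial * A B * max 1 B ^ k := by
        refine norm_iteratedFDeriv_comp_le hg hv.contDiff (mod_cast hk) x (fun i hi => ?_)
          fun i hi hik => ?_
        · exact (hAg i (hi.trans hk) _).trans (hA.1 (hv.norm_le x))
        · exact (hv.norm_iteratedFDeriv_le i (hik.trans hk) x).trans
            ((le_max_right 1 B).trans (le_self_pow₀ hB (by lia)))
    _ ≤ n.factorial * A B * max 1 B ^ n := by
        gcongr

lemma exists_goodConst_norm_le_mul_norm {g : F → G} (hg : ContDiff ℝ 1 g) (h₀ : g 0 = 0) :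
    ∃ A : ℝ → ℝ, GoodConst A ∧ ∀ y, ‖g y‖ ≤ A ‖y‖ * ‖y‖ := by
  obtain ⟨A, hA, hAg⟩ := exists_goodConst_norm_le (hg.continuous_fderiv one_ne_zero)
  refine ⟨A, hA, fun y => ?_⟩
  have := (convex_closedBall (0 : F) ‖y‖).norm_image_sub_le_of_norm_fderiv_le (𝕜 := ℝ)
    (fun z _ => hg.differentiable one_ne_zero z)
    (fun z hz => (hAg z).trans (hA.1 (mem_closedBall_zero_iff.1 hz)))
    (Metric.mem_closedBall_self (norm_nonneg y)) (mem_closedBall_zero_iff.2 le_rfl)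
  simpa only [h₀, sub_zero] using this

/- Only the zeroth order uses `g 0 = 0`: the higher derivatives of `g ∘ v` are those of
`(Dg ∘ v) Dv`, which is already linear in `Dv`. -/
lemma exists_goodConst_hasCkBound_comp_of_zero {g : F → G} (hg : ContDiff ℝ (n + 1) g)
    (h₀ : g 0 = 0) :
    ∃ A : ℝ → ℝ, GoodConst A ∧ ∀ B, ∀ v : E → F, HasCkBound n B v →
      HasCkBound n (A B * B) (fun x => g (v x)) := by
  obtain ⟨A, hA, hAg⟩ := exists_goodConst_norm_le_mul_norm (hg.of_le (by simp)) h₀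
  have hgv_le {B : ℝ} {v : E → F} (hv : HasCkBound n B v) (x : E) : ‖g (v x)‖ ≤ A B * B :=
    (hAg _).trans (mul_le_mul (hA.1 (hv.norm_le x)) (hv.norm_le x) (norm_nonneg _) (hA.2 B).le)
  cases n with
  | zero =>
    exact ⟨A, hA, fun B v hv =>
      HasCkBound.zero_iff.2 ⟨hg.continuous.comp hv.contDiff.continuous, hgv_le hv⟩⟩
  | succ n =>
    obtain ⟨A', hA', hAg'⟩ := exists_goodConst_hasCkBound_comp (E := E) (n := n)
      (hg.fderiv_right (m := n) (by norm_cast; lia))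
    have hgd : Differentiable ℝ g := hg.differentiable (by simp)
    have hvd {B : ℝ} {v : E → F} (hv : HasCkBound (n + 1) B v) : Differentiable ℝ v :=
      hv.contDiff.differentiable (by simp)
    refine ⟨_, hA.add (hA'.const_mul (c := 2 ^ n) (by positivity)), fun B v hv =>
      .of_fderiv (fun x => ?_) (fun x => ?_) ?_⟩
    · exact (hgd (v x)).comp x (hvd hv x)
    · refine (hgv_le hv x).trans (mul_le_mul_of_nonneg_right ?_ hv.nonneg)
      exact le_add_of_nonneg_right (mul_pos (by positivity) (hA'.2 B)).le
    · have hchain : fderiv ℝ (fun x => g (v x)) = fun x =>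
          ContinuousLinearMap.compL ℝ E F G (fderiv ℝ g (v x)) (fderiv ℝ v x) :=
        funext fun x => fderiv_comp x (hgd (v x)) (hvd hv x)
      rw [hchain]
      refine ((hAg' B v (hv.mono n.le_succ le_rfl)).bilin _
        (ContinuousLinearMap.norm_compL_le ℝ E F G) hv.fderiv_right).mono le_rfl
        (mul_le_mul_of_nonneg_right ?_ hv.nonneg)
      exact le_add_of_nonneg_left (hA.2 B).le

lemma exists_goodConst_hasCkBound_sum_comp_mul {ι : Type*} [Fintype ι] [Nonempty ι]
    {g : ι → F → ℂ} (hg : ∀ l, ContDiff ℝ n (g l)) :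
    ∃ C : ℝ → ℝ, GoodConst C ∧ ∀ A, ∀ v : E → F, HasCkBound n A v →
      ∀ B, ∀ w : ι → E → ℂ, (∀ l, HasCkBound n B (w l)) →
        HasCkBound n (C A * B) (fun x => ∑ l, g l (v x) * w l x) := by
  choose A hA hAg using fun l => exists_goodConst_hasCkBound_comp (E := E) (hg l)
  refine ⟨_, .sum fun l => (hA l).const_mul (c := 2 ^ n) (by positivity),
    fun M v hv B w hw => ?_⟩
  rw [Finset.sum_mul]
  exact .sum fun l => (hAg l M v hv).bilin (ContinuousLinearMap.mul ℝ ℂ)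
    (ContinuousLinearMap.opNorm_mul_le ℝ ℂ) (hw l)

end Composition

section Sobolev

lemma one_le_jb (n : Zd d) : 1 ≤ jb n :=
  Real.one_le_sqrt.2 (le_add_of_nonneg_right (by positivity))

lemma jb_pos (n : Zd d) : 0 < jb n := one_pos.trans_le (one_le_jb n)

lemma abs_le_jb (n : Zd d) (i : Fin d) : |(n i : ℝ)| ≤ jb n :=
  Real.abs_le_sqrt <| (Finset.single_le_sum (f := fun i => (n i : ℝ) ^ 2)
    (fun _ _ => sq_nonneg _) (Finset.mem_univ i)).trans (le_add_of_nonneg_left zero_le_one)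

lemma norm_intCast_le_jb (n : Zd d) : ‖fun i => (n i : ℝ)‖ ≤ jb n :=
  (pi_norm_le_iff_of_nonneg (jb_pos n).le).2 (abs_le_jb n)

lemma summable_jb_rpow {r : ℝ} (hr : r < -(d : ℝ)) : Summable fun n : Zd d => jb n ^ r := by
  let φ := ((Pi.basisFun ℝ (Fin d)).restrictScalars ℤ).equivFun.symm
  have hφ (n : Zd d) : (φ n : Vec d) = fun i => (n i : ℝ) := by
    ext
    simp [φ, Module.Basis.equivFun_symm_apply, Finset.sum_apply, Pi.single_apply]
  have hsum : Summable fun n : Zd d => ‖φ n‖ ^ r :=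
    (ZLattice.summable_norm_rpow _ r
      (by rwa [ZLattice.rank ℝ, Module.finrank_fin_fun])).comp_injective φ.injective
  refine hsum.of_norm_bounded_eventually ?_
  refine Filter.eventually_cofinite.2 ((Set.finite_singleton (0 : Zd d)).subset fun n hn => ?_)
  contrapose! hn
  have hpos : 0 < ‖φ n‖ := norm_pos_iff.2 (φ.map_ne_zero_iff.2 hn)
  rw [Set.notMem_ofPred_iff, not_lt, Real.norm_of_nonneg (Real.rpow_nonneg (jb_pos n).le r)]
  refine Real.rpow_le_rpow_of_nonpos hpos ?_ (by linarith [(Nat.cast_nonneg d : (0 : ℝ) ≤ d)])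
  exact (congrArg norm (hφ n)).trans_le (norm_intCast_le_jb n)

/-- The phase `x ↦ n·x` of the `n`-th Fourier mode, whose norm governs the growth of its
derivatives. -/
def phase (n : Zd d) : Vec d →L[ℝ] ℝ := ∑ i, (n i : ℝ) • ContinuousLinearMap.proj i

lemma phase_apply (n : Zd d) (x : Vec d) : phase n x = ∑ i, (n i : ℝ) * x i := by
  simp [phase]

lemma norm_phase_le (n : Zd d) : ‖phase n‖ ≤ d * jb n := by
  have hproj (i : Fin d) : ‖(n i : ℝ) • (ContinuousLinearMap.proj i : Vec d →L[ℝ] ℝ)‖ ≤ jb n := by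
    rw [norm_smul, ← mul_one (jb n)]
    refine mul_le_mul (abs_le_jb n i) ?_ (norm_nonneg _) (jb_pos n).le
    exact ContinuousLinearMap.opNorm_le_bound _ zero_le_one fun x => by
      simpa using norm_le_pi_norm x i
  simpa [phase] using norm_sum_le_of_le Finset.univ fun i _ => hproj i

lemma InHsSeq.summable_and_tsum_le {t r : ℝ} (hrt : r + d / 2 < t) {c : Seq d}
    (hc : InHsSeq t c) :
    (Summable fun n => jb n ^ r * ‖c n‖) ∧
      ∑' n, jb n ^ r * ‖c n‖ ≤ √(∑' n : Zd d, jb n ^ (2 * (r - t))) * hsNorm t c := by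
  have hsq (a : ℝ) (n : Zd d) : (jb n ^ a) ^ (2 : ℝ) = jb n ^ (2 * a) := by
    rw [← Real.rpow_mul (jb_pos n).le, mul_comm]
  have hsqc (n : Zd d) : (jb n ^ t * ‖c n‖) ^ (2 : ℝ) = jb n ^ (2 * t) * ‖c n‖ ^ 2 := by
    rw [Real.mul_rpow (Real.rpow_nonneg (jb_pos n).le t) (norm_nonneg _), hsq, Real.rpow_two]
  have hsplit (n : Zd d) : jb n ^ (r - t) * (jb n ^ t * ‖c n‖) = jb n ^ r * ‖c n‖ := by
    rw [← mul_assoc, ← Real.rpow_add (jb_pos n), sub_add_cancel]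
  have h := Real.summable_and_inner_le_Lp_mul_Lq_tsum_of_nonneg Real.HolderConjugate.two_two
    (f := fun n : Zd d => jb n ^ (r - t)) (g := fun n => jb n ^ t * ‖c n‖)
    (fun n => Real.rpow_nonneg (jb_pos n).le _)
    (fun n => mul_nonneg (Real.rpow_nonneg (jb_pos n).le _) (norm_nonneg _))
    (by simpa only [hsq] using summable_jb_rpow (by linarith))
    (by simpa only [hsqc, InHsSeq] using hc)
  simpa only [hsq, hsqc, hsplit, ← Real.sqrt_eq_rpow, hsNorm, hsNormSq] using h

lemma exists_hasCkBound_of_inHs (N : ℕ) {t : ℝ} (ht : N + d / 2 < t) :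
    ∃ K > 0, ∀ u : Fn d, InHs t u → HasCkBound N (K * sobNorm t u) u := by
  set c : ℝ := (2 * π) ^ (-(d : ℝ) / 2)
  have hc : 0 ≤ c := by positivity
  set S := √(∑' n : Zd d, jb n ^ (2 * (N - t)))
  refine ⟨c * (d + 1) ^ N * S + 1, by positivity, fun u ⟨_, hu, hseries⟩ => ?_⟩
  obtain ⟨hsum, hle⟩ := hu.summable_and_tsum_le ht
  have hmode (n : Zd d) : HasCkBound N (c * (d + 1) ^ N * (jb n ^ (N : ℝ) * ‖fCoeff u n‖))
      (fun x : Vec d => (c : ℂ) * fCoeff u n *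
        Complex.exp (Complex.I * ((∑ i, (n i : ℝ) * x i : ℝ) : ℂ))) := by
    have hphase : ‖phase n‖ ≤ (d + 1) * jb n := by linarith [norm_phase_le n, jb_pos n]
    have hexp := hasCkBound_cexp_I_mul (phase n) hphase
      (one_le_mul_of_one_le_of_one_le (by simp) (one_le_jb n)) N
    simp only [phase_apply] at hexp
    refine (hexp.clm_comp (ContinuousLinearMap.mul ℝ ℂ (c * fCoeff u n))).mono le_rfl ?_
    rw [ContinuousLinearMap.opNorm_mul_apply, norm_mul, Complex.norm_real,
      Real.norm_of_nonneg hc, mul_pow, Real.rpow_natCast]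
    exact le_of_eq (by ring)
  have hu_eq : u = fun x => ∑' n : Zd d, (c : ℂ) * fCoeff u n *
      Complex.exp (Complex.I * ((∑ i, (n i : ℝ) * x i : ℝ) : ℂ)) :=
    funext fun x => (hseries x).tsum_eq.symm
  have hbound := HasCkBound.tsum (hsum.mul_left _) hmode
  rw [← hu_eq, tsum_mul_left] at hbound
  refine hbound.mono le_rfl ?_
  have hnorm : 0 ≤ sobNorm t u := Real.sqrt_nonneg _
  calc c * (d + 1) ^ N * ∑' n : Zd d, jb n ^ (N : ℝ) * ‖fCoeff u n‖
      ≤ c * (d + 1) ^ N * (S * sobNorm t u) := by gcongr; exact hle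
    _ ≤ (c * (d + 1) ^ N * S + 1) * sobNorm t u := by linarith

end Sobolev

section Symbols

lemma pdF_mul_const (i : Fin d) (g : Fn d) (c : ℂ) :
    pdF i (fun x => g x * c) = fun x => pdF i g x * c := by
  ext x
  have hsmul : (fun x => g x * c) = c • g := funext fun x => mul_comm (g x) c
  simp only [pdF, hsmul, fderiv_const_smul_field, Pi.smul_apply, smul_apply,
    smul_eq_mul, mul_comm c]

lemma pdF_const_mul (i : Fin d) (c : ℂ) (g : Fn d) :
    pdF i (fun x => c * g x) = fun x => c * pdF i g x := by
  simpa only [mul_comm c] using pdF_mul_const i g c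

/-- The iterated partial derivative `∂_{x_{l₁}} ⋯ ∂_{x_{lₙ}} g` along a list of directions, the
counterpart of `mderiv` for functions of one variable. -/
def iterPd (l : List (Fin d)) (g : Fn d) : Fn d := l.foldr pdF g

lemma mderiv_mul (L : List (Fin d ⊕ Fin d)) (g f : Fn d) :
    mderiv L (fun x ξ => g x * f ξ) = fun x ξ =>
      iterPd (L.filterMap Sum.getLeft?) g x * iterPd (L.filterMap Sum.getRight?) f ξ := by
  induction L with
  | nil => rfl
  | cons i L ih =>
    rcases i with i | i
    · change pdx i (mderiv L _) = _
      rw [ih]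
      exact funext₂ fun x ξ => congrFun (pdF_mul_const i _ _) x
    · change pdxi i (mderiv L _) = _
      rw [ih]
      exact funext₂ fun x ξ => congrFun (pdF_const_mul i _ _) ξ

lemma mderiv_map_inr (l : List (Fin d)) (f : Fn d) :
    mderiv (l.map Sum.inr) (fun _ ξ => f ξ) = fun _ ξ => iterPd l f ξ := by
  induction l with
  | nil => rfl
  | cons i l ih =>
    change pdxi i (mderiv (l.map Sum.inr) _) = _
    rw [ih]
    rfl

lemma nXi_map_filterMap_getRight? (L : List (Fin d ⊕ Fin d)) :
    nXi ((L.filterMap Sum.getRight?).map Sum.inr) = nXi L := by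
  induction L with
  | nil => rfl
  | cons i L ih =>
    rcases i with _ | _
    · exact ih
    · exact congrArg Nat.succ ih

lemma symNorm_nonneg (m : ℝ) (s : ℕ) (a : Sym d) : 0 ≤ symNorm m s a := by
  refine Real.sSup_nonneg ?_
  rintro _ ⟨L, x, ξ, -, rfl⟩
  exact mul_nonneg (Real.rpow_nonneg (Real.sqrt_nonneg _) _) (norm_nonneg _)

lemma HasCkBound.pdF {n : ℕ} {B : ℝ} {g : Fn d} (hg : HasCkBound (n + 1) B g) (i : Fin d) :
    HasCkBound n B (pdF i g) := by
  refine (hg.fderiv_right.clm_comp (ContinuousLinearMap.apply ℝ ℂ (Pi.single i 1))).mono le_rfl ?_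
  refine mul_le_of_le_one_left hg.nonneg (ContinuousLinearMap.opNorm_le_bound _ zero_le_one ?_)
  intro L
  simpa only [one_mul, Pi.norm_single, norm_one, mul_one, ContinuousLinearMap.apply_apply]
    using L.le_opNorm (Pi.single i 1)

lemma HasCkBound.iterPd {B : ℝ} {g : Fn d} (l : List (Fin d)) {n : ℕ}
    (hg : HasCkBound (n + l.length) B g) : HasCkBound n B (iterPd l g) := by
  induction l generalizing n with
  | nil => exact hg
  | cons i l ih => exact (ih (hg.mono (by simp; lia) le_rfl)).pdF i

lemma symNorm_mul_le {m : ℝ} {s : ℕ} {B C₀ : ℝ} {g f : Fn d} (hg : HasCkBound s B g)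
    (hf : BddAbove (symVals m s fun _ ξ => f ξ)) (hfC : symNorm m s (fun _ ξ => f ξ) ≤ C₀) :
    symNorm m s (fun x ξ => g x * f ξ) ≤ C₀ * B := by
  have hC₀ : 0 ≤ C₀ := (symNorm_nonneg _ _ _).trans hfC
  refine Real.sSup_le ?_ (mul_nonneg hC₀ hg.nonneg)
  rintro _ ⟨L, x, ξ, hL, rfl⟩
  have hlen {p : Fin d ⊕ Fin d → Option (Fin d)} : (L.filterMap p).length ≤ s :=
    (List.length_filterMap_le _ _).trans hL
  have hx : ‖iterPd (L.filterMap Sum.getLeft?) g x‖ ≤ B :=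
    (HasCkBound.iterPd (n := 0) _ (hg.mono (by simpa using hlen) le_rfl)).norm_le x
  have hξ : jbR ξ ^ (-m + (nXi L : ℝ)) * ‖iterPd (L.filterMap Sum.getRight?) f ξ‖
      ≤ C₀ :=
    (le_csSup hf ⟨(L.filterMap Sum.getRight?).map Sum.inr, x, ξ, by simpa using hlen,
      by rw [mderiv_map_inr, nXi_map_filterMap_getRight?]⟩).trans hfC
  calc jbR ξ ^ (-m + (nXi L : ℝ)) * ‖mderiv L (fun x ξ => g x * f ξ) x ξ‖
      = jbR ξ ^ (-m + (nXi L : ℝ)) * ‖iterPd (L.filterMap Sum.getRight?) f ξ‖ *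
          ‖iterPd (L.filterMap Sum.getLeft?) g x‖ := by rw [mderiv_mul, norm_mul]; ring
    _ ≤ C₀ * B := mul_le_mul hξ hx (norm_nonneg _) hC₀

end Symbols

section Nemytskii

lemma HasCkBound.jet_apply {n : ℕ} {B : ℝ} {u : Fn d} (hu : HasCkBound (n + 1) B u)
    (l : Fin (d + 1)) : HasCkBound n B (fun x => jet u x l) := by
  cases l using Fin.cases with
  | zero => exact hu.mono n.le_succ le_rfl
  | succ i => exact hu.pdF i

lemma HasCkBound.jet {n : ℕ} {B : ℝ} {u : Fn d} (hu : HasCkBound (n + 1) B u) :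
    HasCkBound n B (jet u) :=
  .pi hu.nonneg hu.jet_apply

lemma jet_add {u v : Fn d} {x : Vec d} (hu : DifferentiableAt ℝ u x)
    (hv : DifferentiableAt ℝ v x) : jet (u + v) x = jet u x + jet v x := by
  ext l
  cases l using Fin.cases <;> simp [jet, pdF, fderiv_add hu hv]

lemma jet_const_mul (z : ℂ) (u : Fn d) (x : Vec d) : jet (fun y => z * u y) x = z • jet u x := by
  ext l
  cases l using Fin.cases <;> simp [jet, pdF_const_mul]

variable {F : (Fin (d + 1) → ℂ) → ℂ} {α β σ σ' : Bool} {j k : Fin d} {f : Vec d → ℂ} {u : Fn d}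

lemma nemSymDu_add {h₁ h₂ : Fn d} {x ξ : Vec d} (hh₁ : DifferentiableAt ℝ h₁ x)
    (hh₂ : DifferentiableAt ℝ h₂ x) :
    nemSymDu F α β σ σ' j k f u (h₁ + h₂) x ξ
      = nemSymDu F α β σ σ' j k f u h₁ x ξ + nemSymDu F α β σ σ' j k f u h₂ x ξ := by
  simp only [nemSymDu, jet_add hh₁ hh₂, Pi.add_apply, mul_add, Finset.sum_add_distrib, add_mul]

lemma nemSymDu_const_mul (z : ℂ) (h : Fn d) (x ξ : Vec d) :
    nemSymDu F α β σ σ' j k f u (fun y => z * h y) x ξ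
      = z * nemSymDu F α β σ σ' j k f u h x ξ := by
  simp only [nemSymDu, jet_const_mul, Pi.smul_apply, smul_eq_mul, mul_left_comm _ z,
    ← Finset.mul_sum, mul_assoc]

end Nemytskii

section Wirtinger

variable {n : ℕ}

/-- The Wirtinger derivative in slot `j` as a linear functional of the real differential; the flag
selects `∂_{y_j}` or `∂_{ȳ_j}` as in `wdSel`. It reduces regularity and vanishing of Wirtinger
derivatives to those of `fderiv`. -/
def wirtingerCLM (c : Bool) (j : Fin n) : ((Fin n → ℂ) →L[ℝ] ℂ) →L[ℝ] ℂ :=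
  (1 / 2 : ℂ) • (ContinuousLinearMap.apply ℝ ℂ (Pi.single j 1 : Fin n → ℂ) +
    (if c then Complex.I else -Complex.I) •
      ContinuousLinearMap.apply ℝ ℂ (Pi.single j Complex.I : Fin n → ℂ))

lemma wdSel_eq_wirtingerCLM_comp_fderiv (c : Bool) (j : Fin n) (G : (Fin n → ℂ) → ℂ) :
    wdSel c j G = wirtingerCLM c j ∘ fderiv ℝ G := by
  ext y
  cases c <;> simp [wdSel, wirtingerCLM, wdP, wdM] <;> ring

lemma contDiff_wdSel {r : WithTop ℕ∞} (c : Bool) (j : Fin n) {G : (Fin n → ℂ) → ℂ}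
    (hG : ContDiff ℝ (r + 1) G) : ContDiff ℝ r (wdSel c j G) := by
  rw [wdSel_eq_wirtingerCLM_comp_fderiv]
  exact (wirtingerCLM c j).contDiff.comp (hG.fderiv_right le_rfl)

lemma fderiv_fderiv_eq_zero {E F : Type*} [NormedAddCommGroup E] [NormedSpace ℝ E]
    [NormedAddCommGroup F] [NormedSpace ℝ F] {G : E → F} {y : E}
    (h₂ : iteratedFDeriv ℝ 2 G y = 0) : fderiv ℝ (fderiv ℝ G) y = 0 := by
  ext v w
  simpa [iteratedFDeriv_two_apply] using DFunLike.congr_fun h₂ ![v, w]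

lemma wdSel_wdSel_eq_zero {G : (Fin n → ℂ) → ℂ} {y : Fin n → ℂ}
    (hG : DifferentiableAt ℝ (fderiv ℝ G) y) (h₂ : iteratedFDeriv ℝ 2 G y = 0) (c c' : Bool)
    (i j : Fin n) : wdSel c i (wdSel c' j G) y = 0 := by
  simp only [wdSel_eq_wirtingerCLM_comp_fderiv, Function.comp_apply,
    ((wirtingerCLM c' j).hasFDerivAt.comp y hG.hasFDerivAt).fderiv,
    fderiv_fderiv_eq_zero h₂, ContinuousLinearMap.comp_zero, map_zero]

end Wirtinger

section Estimates

variable {s : ℕ} {t : ℝ}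

lemma exists_goodConst_symNorm_comp_jet_le {G : (Fin (d + 1) → ℂ) → ℂ}
    (hG : ContDiff ℝ (s + 1) G) (h₀ : G 0 = 0) (ht : s + 1 + d / 2 < t) (C₀ : ℝ) :
    ∃ C : ℝ → ℝ, GoodConst C ∧ ∀ (m : ℝ) (f : Fn d), BddAbove (symVals m s fun _ ξ => f ξ) →
      symNorm m s (fun _ ξ => f ξ) ≤ C₀ → ∀ u : Fn d, InHs t u →
        symNorm m s (fun x ξ => G (jet u x) * f ξ) ≤ C (sobNorm t u) * sobNorm t u := by
  obtain ⟨K, hK, hsob⟩ := exists_hasCkBound_of_inHs (d := d) (s + 1) (mod_cast ht)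
  obtain ⟨A, hA, hAG⟩ := exists_goodConst_hasCkBound_comp_of_zero (E := Vec d) hG h₀
  refine ⟨_, (hA.comp_const_mul hK.le).const_mul (c := max 1 C₀ * K) (by positivity),
    fun m f hf hfC u hu => ?_⟩
  exact (symNorm_mul_le (hAG _ _ (hsob u hu).jet) hf (hfC.trans (le_max_right 1 C₀))).trans_eq
    (by ring)

lemma exists_goodConst_symNorm_sum_comp_jet_mul_le {G : Fin (d + 1) → (Fin (d + 1) → ℂ) → ℂ}
    (hG : ∀ l, ContDiff ℝ s (G l)) (T : ℂ →ₗᵢ[ℝ] ℂ) (ht : s + 1 + d / 2 < t) (C₀ : ℝ) :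
    ∃ C : ℝ → ℝ, GoodConst C ∧ ∀ (m : ℝ) (f : Fn d), BddAbove (symVals m s fun _ ξ => f ξ) →
      symNorm m s (fun _ ξ => f ξ) ≤ C₀ → ∀ u h : Fn d, InHs t u → InHs t h →
        symNorm m s (fun x ξ => (∑ l, G l (jet u x) * T (jet h x l)) * f ξ)
          ≤ C (sobNorm t u) * sobNorm t h := by
  obtain ⟨K, hK, hsob⟩ := exists_hasCkBound_of_inHs (d := d) (s + 1) (mod_cast ht)
  obtain ⟨A, hA, hAG⟩ := exists_goodConst_hasCkBound_sum_comp_mul (E := Vec d) hG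
  refine ⟨_, (hA.comp_const_mul hK.le).const_mul (c := max 1 C₀ * K) (by positivity),
    fun m f hf hfC u h hu hh => ?_⟩
  have hTh (l : Fin (d + 1)) : HasCkBound s (K * sobNorm t h) (fun x => T (jet h x l)) :=
    ((hsob h hh).jet_apply l).linearIsometry_comp T
  exact (symNorm_mul_le (hAG _ _ (hsob u hu).jet _ _ hTh) hf
    (hfC.trans (le_max_right 1 C₀))).trans_eq (by ring)

end Estimates

theorem statement_9_general {s₀ : ℝ} (hs₀ : (d : ℝ) / 2 < s₀) (s : ℕ)
    {F : (Fin (d + 1) → ℂ) → ℂ} (hF : ContDiff ℝ (s + 1 + 1 + 1) F)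
    (hF₀ : iteratedFDeriv ℝ 2 F 0 = 0) (C₀ : ℝ) (α β σ σ' : Bool) (j k : Fin d) :
    ∃ C : ℝ → ℝ, GoodConst C ∧ ∀ (m : ℝ) (f : Vec d → ℂ),
      BddAbove (symVals m s fun _ ξ => f ξ) → symNorm m s (fun _ ξ => f ξ) ≤ C₀ →
      ∀ u : Fn d, InHs ((s : ℝ) + s₀ + 1) u →
        (symNorm m s (nemSym F α β σ σ' j k f u)
            ≤ C (sobNorm ((s : ℝ) + s₀ + 1) u) * sobNorm ((s : ℝ) + s₀ + 1) u) ∧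
        (∀ h₁ h₂ : Fn d, InHs ((s : ℝ) + s₀ + 1) h₁ → InHs ((s : ℝ) + s₀ + 1) h₂ →
          ∀ x ξ : Vec d,
            nemSymDu F α β σ σ' j k f u (h₁ + h₂) x ξ
              = nemSymDu F α β σ σ' j k f u h₁ x ξ + nemSymDu F α β σ σ' j k f u h₂ x ξ) ∧
        (∀ (z : ℂ) (h : Fn d) (x ξ : Vec d),
          nemSymDu F α β σ σ' j k f u (fun y => z * h y) x ξ
            = z * nemSymDu F α β σ σ' j k f u h x ξ) ∧
        (∀ h : Fn d, InHs ((s : ℝ) + s₀ + 1) h →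
          symNorm m s (nemSymDu F α β σ σ' j k f u h)
              ≤ C (sobNorm ((s : ℝ) + s₀ + 1) u) * sobNorm ((s : ℝ) + s₀ + 1) h ∧
          symNorm m s (nemSymDubar F α β σ σ' j k f u h)
              ≤ C (sobNorm ((s : ℝ) + s₀ + 1) u) * sobNorm ((s : ℝ) + s₀ + 1) h) := by
  have ht : (s : ℝ) + 1 + d / 2 < s + s₀ + 1 := by linarith
  obtain ⟨K, -, hsob⟩ := exists_hasCkBound_of_inHs (d := d) (s + 1) (mod_cast ht)
  have hdiff (h : Fn d) (hh : InHs (s + s₀ + 1) h) : Differentiable ℝ h :=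
    (hsob h hh).contDiff.differentiable (by simp)
  set G := wdSel σ (slotIdx α j) (wdSel σ' (slotIdx β k) F)
  have hG : ContDiff ℝ (s + 1) G := contDiff_wdSel _ _ (contDiff_wdSel _ _ hF)
  have hG₀ : G 0 = 0 :=
    wdSel_wdSel_eq_zero ((hF.fderiv_right le_rfl).differentiable (by simp) 0) hF₀ _ _ _ _
  obtain ⟨A, hA, hAG⟩ := exists_goodConst_symNorm_comp_jet_le hG hG₀ ht C₀
  obtain ⟨P, hP, hPG⟩ := exists_goodConst_symNorm_sum_comp_jet_mul_le
    (fun l => contDiff_wdSel false l hG) .id ht C₀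
  obtain ⟨M, hM, hMG⟩ := exists_goodConst_symNorm_sum_comp_jet_mul_le
    (fun l => contDiff_wdSel true l hG) Complex.conjLIE.toLinearIsometry ht C₀
  have hle (r : ℝ) (h : Fn d) {c : ℝ} (hc : c ≤ A r + P r + M r) :
      c * sobNorm (s + s₀ + 1) h ≤ (A r + P r + M r) * sobNorm (s + s₀ + 1) h :=
    mul_le_mul_of_nonneg_right hc (Real.sqrt_nonneg _)
  refine ⟨_, (hA.add hP).add hM, fun m f hf hfC u hu => ?_⟩
  have hA₀ := hA.2 (sobNorm (s + s₀ + 1) u)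
  have hP₀ := hP.2 (sobNorm (s + s₀ + 1) u)
  have hM₀ := hM.2 (sobNorm (s + s₀ + 1) u)
  exact ⟨(hAG m f hf hfC u hu).trans (hle _ u (by linarith)),
    fun h₁ h₂ hh₁ hh₂ x ξ => nemSymDu_add (hdiff h₁ hh₁ x) (hdiff h₂ hh₂ x),
    nemSymDu_const_mul,
    fun h hh => ⟨(hPG m f hf hfC u h hu hh).trans (hle _ h (by linarith)),
      (hMG m f hf hfC u h hu hh).trans (hle _ h (by linarith))⟩⟩

/-- Lemma 2.8: estimates for non-homogeneous symbols
`a(x,ξ) = (∂_{z_j^α}∂_{z_k^β}F)(u,∇u) f(ξ)`: for `u` in a ball of `H^{s+s₀+1}`,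
`|a|_{𝒩^m_s} ≤ C ‖u‖_{H^{s+s₀+1}}`, the differentials `∂_u a`, `∂_{ū}a` are
(anti)linear in `h` and satisfy `|(∂_u a)[h]|_{𝒩^m_s} ≤ C ‖h‖_{H^{s+s₀+1}}`. -/
theorem statement_9 (d : ℕ) (hd : 1 ≤ d) (s₀ : ℝ) (hs₀ : (d : ℝ) / 2 < s₀)
    (s : ℕ) (m : ℝ) (F : (Fin (d + 1) → ℂ) → ℂ) (hF : GoodF d F)
    (f : Vec d → ℂ) (C₀ : ℝ)
    (hf : InSymClass m s (fun (_ : Vec d) ξ => f ξ))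
    (hfC : symNorm m s (fun (_ : Vec d) ξ => f ξ) ≤ C₀)
    (α β σ σ' : Bool) (j k : Fin d) (Rad : ℝ) (hRad : 0 < Rad) :
    ∃ C : ℝ → ℝ, GoodConst C ∧
      ∀ u : Fn d, InHs ((s : ℝ) + s₀ + 1) u → sobNorm ((s : ℝ) + s₀ + 1) u < Rad →
        (symNorm m s (nemSym F α β σ σ' j k f u)
            ≤ C (sobNorm ((s : ℝ) + s₀ + 1) u) * sobNorm ((s : ℝ) + s₀ + 1) u) ∧
        (∀ h₁ h₂ : Fn d, InHs ((s : ℝ) + s₀ + 1) h₁ → InHs ((s : ℝ) + s₀ + 1) h₂ →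
          ∀ x ξ : Vec d,
            nemSymDu F α β σ σ' j k f u (h₁ + h₂) x ξ
              = nemSymDu F α β σ σ' j k f u h₁ x ξ + nemSymDu F α β σ σ' j k f u h₂ x ξ) ∧
        (∀ (z : ℂ) (h : Fn d), InHs ((s : ℝ) + s₀ + 1) h → ∀ x ξ : Vec d,
          nemSymDu F α β σ σ' j k f u (fun y => z * h y) x ξ
            = z * nemSymDu F α β σ σ' j k f u h x ξ) ∧
        (∀ h : Fn d, InHs ((s : ℝ) + s₀ + 1) h →
          symNorm m s (nemSymDu F α β σ σ' j k f u h)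
              ≤ C (sobNorm ((s : ℝ) + s₀ + 1) u) * sobNorm ((s : ℝ) + s₀ + 1) h ∧
          symNorm m s (nemSymDubar F α β σ σ' j k f u h)
              ≤ C (sobNorm ((s : ℝ) + s₀ + 1) u) * sobNorm ((s : ℝ) + s₀ + 1) h) := by
  obtain ⟨C, hC, h⟩ := statement_9_general hs₀ s (hF.1.of_le (mod_cast le_top))
    (hF.2.2 2 le_rfl) C₀ α β σ σ' j k
  exact ⟨C, hC, fun u hu _ => (h m f hf.2.2 hfC u hu).imp_right <|
    .imp_right <| .imp_left fun hsmul z h _ => hsmul z h⟩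
end QLNLS
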